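/- Let T = I + γA be invertible with T x = e₁ⁿ and T y = e_nⁿ (first and last standard basis vectors of ℝⁿ), assume the Gohberg–Semencul identity T⁻¹ = GSF(x,y) holds with ξ₀ ≠ 0 the first entry of x, and let x̃, ỹ ∈ ℝⁿ with first entry ξ̃₀ of x̃ nonzero, ε > 0 with ‖x̃ − x‖₁ ≤ ε‖x‖₁ and ‖ỹ − y‖₁ ≤ ε‖y‖₁, and ε̃ = |1/ξ₀ − 1/ξ̃₀| / |1/ξ₀|. Suppose the inexact shift-and-invert Arnoldi relation (I+γA)⁻¹V + F = V H̃ + h̃ v e_mᵀ holds with H̃ invertible and VᵀV = I_m, where the i-th column of F is f_i = GSF(x̃,ỹ)·v_i − T⁻¹·v_i with v_i the i-th column of V, and let G = −(1/γ)(I+γA) F H̃⁻¹ Vᵀ. Then for every u ∈ ℝ^m, ‖G V u‖₂ ≤ (2/(|γ|·|ξ₀|))·[ε + (ε + (1+ε)ε̃)(1+ε)]·‖x‖₁·‖y‖₁·√m·‖I+γA‖₂·‖H̃⁻¹ u‖₂. -/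

import Mathlib

/-!
The Gohberg–Semencul numerator `D x y = L_x R_y - L⁰_y R⁰_x` is bilinear in `(x, y)`. Each of the
four Toeplitz factors carries every entry of its generating vector at most once per row and once
per column, so by the Schur test its spectral norm is at most the `ℓ¹` norm of that vector
(`matNorm2_le_of_toeplitz`); hence `‖D x y‖₂ ≤ 2 ‖x‖₁ ‖y‖₁`. Writing `a = 1/ξ₀`, `ã = 1/ξ̃₀`,
bilinearity gives
`ã D x̃ ỹ - a D x y = D (ã x̃ - a x) ỹ + a D x (ỹ - y)`,
and the two terms are bounded by `2 |a| (ε + (1+ε) ε̃) (1+ε) ‖x‖₁ ‖y‖₁` and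
`2 |a| ε ‖x‖₁ ‖y‖₁`; this bounds `E = GSF x̃ ỹ - T⁻¹` (`matNorm2_GSF_sub_le`).
Finally `F = E V` and `Vᵀ V = 1`, so `G V u = -γ⁻¹ T E V (H̃⁻¹ u)` with `V` isometric, and
the factor `√m ≥ 1` is only a loss.
-/

open Matrix

noncomputable section

/-- ℓ¹ norm of a vector. -/
def vecNorm1 {n : ℕ} (x : Fin n → ℝ) : ℝ := ∑ i, |x i|

/-- ℓ² norm of a vector. -/
def vecNorm2 {n : ℕ} (x : Fin n → ℝ) : ℝ := Real.sqrt (∑ i, (x i) ^ 2)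

/-- Matrix operator norm induced by the ℓ¹ vector norm (max absolute column sum). -/
def matNorm1 {n : ℕ} (M : Matrix (Fin n) (Fin n) ℝ) : ℝ := ⨆ j, ∑ i, |M i j|

/-- Matrix operator norm induced by the ℓ∞ vector norm (max absolute row sum). -/
def matNormInf {n : ℕ} (M : Matrix (Fin n) (Fin n) ℝ) : ℝ := ⨆ i, ∑ j, |M i j|

/-- Spectral norm: operator norm induced by the ℓ² vector norm. -/
def matNorm2 {n : ℕ} (M : Matrix (Fin n) (Fin n) ℝ) : ℝ :=
  ‖Matrix.toEuclideanCLM (𝕜 := ℝ) M‖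

/-- The last index of `Fin n`. -/
def lastIdx (n : ℕ) [NeZero n] : Fin n := ⟨n - 1, by have := Nat.pos_of_neZero n; omega⟩

/-- Lower triangular Toeplitz matrix built from `x`. -/
def Lmat {n : ℕ} (x : Fin n → ℝ) : Matrix (Fin n) (Fin n) ℝ :=
  Matrix.of fun i j =>
    if (j : ℕ) ≤ i then x ⟨(i : ℕ) - j, lt_of_le_of_lt (Nat.sub_le _ _) i.isLt⟩ else 0

/-- Upper triangular Toeplitz matrix built from `y`. -/
def Rmat {n : ℕ} (y : Fin n → ℝ) : Matrix (Fin n) (Fin n) ℝ :=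
  Matrix.of fun i j =>
    if (i : ℕ) ≤ j then y ⟨n - 1 - ((j : ℕ) - i), by have := i.isLt; omega⟩ else 0

/-- Strictly lower triangular Toeplitz matrix built from `y`. -/
def L0mat {n : ℕ} (y : Fin n → ℝ) : Matrix (Fin n) (Fin n) ℝ :=
  Matrix.of fun i j =>
    if (j : ℕ) < i then y ⟨(i : ℕ) - j - 1, by have := i.isLt; omega⟩ else 0

/-- Strictly upper triangular Toeplitz matrix built from `x`. -/
def R0mat {n : ℕ} (x : Fin n → ℝ) : Matrix (Fin n) (Fin n) ℝ :=
  Matrix.of fun i j =>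
    if h : (i : ℕ) < j then x ⟨n - ((j : ℕ) - i), by have := j.isLt; omega⟩ else 0

/-- The Gohberg–Semencul expression. -/
def GSF {n : ℕ} [NeZero n] (x y : Fin n → ℝ) : Matrix (Fin n) (Fin n) ℝ :=
  (x 0)⁻¹ • (Lmat x * Rmat y - L0mat y * R0mat x)

/-! ### The norms -/

theorem vecNorm1_nonneg {n : ℕ} (x : Fin n → ℝ) : 0 ≤ vecNorm1 x :=
  Finset.sum_nonneg fun _ _ => abs_nonneg _

theorem vecNorm1_add_le {n : ℕ} (x y : Fin n → ℝ) :
    vecNorm1 (x + y) ≤ vecNorm1 x + vecNorm1 y := by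
  unfold vecNorm1
  rw [← Finset.sum_add_distrib]
  exact Finset.sum_le_sum fun i _ => abs_add_le _ _

theorem vecNorm1_smul {n : ℕ} (a : ℝ) (x : Fin n → ℝ) :
    vecNorm1 (a • x) = |a| * vecNorm1 x := by
  simp [vecNorm1, abs_mul, Finset.mul_sum]

theorem vecNorm2_eq_norm {n : ℕ} (x : Fin n → ℝ) : vecNorm2 x = ‖WithLp.toLp 2 x‖ := by
  simp [vecNorm2, EuclideanSpace.norm_eq]

theorem vecNorm2_nonneg {n : ℕ} (x : Fin n → ℝ) : 0 ≤ vecNorm2 x := Real.sqrt_nonneg _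

theorem vecNorm2_smul {n : ℕ} (a : ℝ) (x : Fin n → ℝ) :
    vecNorm2 (a • x) = |a| * vecNorm2 x := by
  simp [vecNorm2_eq_norm, norm_smul]

theorem matNorm2_nonneg {n : ℕ} (M : Matrix (Fin n) (Fin n) ℝ) : 0 ≤ matNorm2 M :=
  norm_nonneg _

theorem matNorm2_mul_le {n : ℕ} (M N : Matrix (Fin n) (Fin n) ℝ) :
    matNorm2 (M * N) ≤ matNorm2 M * matNorm2 N := by
  unfold matNorm2
  rw [map_mul]
  exact norm_mul_le _ _

theorem matNorm2_add_le {n : ℕ} (M N : Matrix (Fin n) (Fin n) ℝ) :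
    matNorm2 (M + N) ≤ matNorm2 M + matNorm2 N := by
  unfold matNorm2
  rw [map_add]
  exact norm_add_le _ _

theorem matNorm2_sub_le {n : ℕ} (M N : Matrix (Fin n) (Fin n) ℝ) :
    matNorm2 (M - N) ≤ matNorm2 M + matNorm2 N := by
  unfold matNorm2
  rw [map_sub]
  exact norm_sub_le _ _

theorem matNorm2_smul {n : ℕ} (a : ℝ) (M : Matrix (Fin n) (Fin n) ℝ) :
    matNorm2 (a • M) = |a| * matNorm2 M := by
  unfold matNorm2
  rw [map_smul, norm_smul, Real.norm_eq_abs]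

theorem vecNorm2_mulVec_le {n : ℕ} (M : Matrix (Fin n) (Fin n) ℝ) (w : Fin n → ℝ) :
    vecNorm2 (M.mulVec w) ≤ matNorm2 M * vecNorm2 w := by
  rw [vecNorm2_eq_norm, vecNorm2_eq_norm]
  exact (Matrix.toEuclideanCLM (𝕜 := ℝ) M).le_opNorm (WithLp.toLp 2 w)

theorem vecNorm2_mulVec_of_orthonormal {n m : ℕ} (V : Matrix (Fin n) (Fin m) ℝ)
    (hV : Vᵀ * V = 1) (w : Fin m → ℝ) : vecNorm2 (V.mulVec w) = vecNorm2 w := by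
  have key : V.mulVec w ⬝ᵥ V.mulVec w = w ⬝ᵥ w := by
    rw [Matrix.dotProduct_mulVec, ← Matrix.mulVec_transpose, Matrix.mulVec_mulVec, hV,
      Matrix.one_mulVec]
  unfold vecNorm2
  congr 1
  simpa [dotProduct, sq] using key

/-! ### Spectral norm of the Toeplitz factors -/

/-- Schur test: a matrix whose absolute row and column sums are at most `S` has spectral norm at
most `S`. -/
theorem matNorm2_le_of_sums {n : ℕ} (M : Matrix (Fin n) (Fin n) ℝ) (S : ℝ) (hS : 0 ≤ S)
    (hr : ∀ i, ∑ j, |M i j| ≤ S) (hc : ∀ j, ∑ i, |M i j| ≤ S) : matNorm2 M ≤ S := by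
  unfold matNorm2
  refine ContinuousLinearMap.opNorm_le_bound _ hS fun w => ?_
  have hw : (Matrix.toEuclideanCLM (𝕜 := ℝ) M) w = WithLp.toLp 2 (M.mulVec w.ofLp) := rfl
  rw [hw, ← vecNorm2_eq_norm]
  have hw' : ‖w‖ = vecNorm2 w.ofLp := by rw [vecNorm2_eq_norm]
  rw [hw']
  generalize w.ofLp = z
  unfold vecNorm2
  rw [← Real.sqrt_sq hS, ← Real.sqrt_mul (sq_nonneg S)]
  apply Real.sqrt_le_sqrt
  -- Cauchy–Schwarz with weights `|M i j|` in each row.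
  have hrow : ∀ i, (M.mulVec z i) ^ 2 ≤ S * ∑ j, |M i j| * z j ^ 2 := by
    intro i
    have hnn : 0 ≤ ∑ j, |M i j| * z j ^ 2 :=
      Finset.sum_nonneg fun j _ => mul_nonneg (abs_nonneg _) (sq_nonneg _)
    refine le_trans ?_ (mul_le_mul_of_nonneg_right (hr i) hnn)
    change (∑ j, M i j * z j) ^ 2 ≤ _
    refine Finset.sum_sq_le_sum_mul_sum_of_sq_le_mul Finset.univ
      (fun j _ => abs_nonneg (M i j))
      (fun j _ => mul_nonneg (abs_nonneg (M i j)) (sq_nonneg (z j))) fun j _ => le_of_eq ?_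
    rw [mul_pow, ← sq_abs (M i j)]
    ring
  calc ∑ i, (M.mulVec z i) ^ 2 ≤ ∑ i, S * ∑ j, |M i j| * z j ^ 2 :=
        Finset.sum_le_sum fun i _ => hrow i
    _ = S * ∑ j, (∑ i, |M i j|) * z j ^ 2 := by
        rw [← Finset.mul_sum, Finset.sum_comm]
        simp_rw [Finset.sum_mul]
    _ ≤ S * ∑ j, S * z j ^ 2 := by
        gcongr with j
        exact hc j
    _ = S ^ 2 * ∑ j, z j ^ 2 := by
        rw [← Finset.mul_sum]; ring

theorem sum_abs_le_vecNorm1 {n : ℕ} (x r : Fin n → ℝ) (s : Fin n → Fin n)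
    (P : Fin n → Prop) (h1 : ∀ j, P j → r j = x (s j)) (h0 : ∀ j, ¬ P j → r j = 0)
    (hinj : ∀ j j', P j → P j' → s j = s j' → j = j') :
    ∑ j, |r j| ≤ vecNorm1 x := by
  classical
  have e : ∑ j, |r j| = ∑ j ∈ Finset.univ.filter P, |x (s j)| := by
    rw [Finset.sum_filter]
    refine Finset.sum_congr rfl fun j _ => ?_
    split_ifs with h
    · rw [h1 j h]
    · rw [h0 j h, abs_zero]
  have hi : Set.InjOn s (Finset.univ.filter P : Finset (Fin n)) := by
    intro j hj j' hj' h
    simp only [Finset.coe_filter, Finset.mem_univ, true_and, Set.mem_ofPred_eq] at hj hj'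
    exact hinj j j' hj hj' h
  rw [e, ← Finset.sum_image (f := fun k => |x k|) hi]
  exact Finset.sum_le_sum_of_subset_of_nonneg (Finset.subset_univ _) fun _ _ _ => abs_nonneg _

/-- A matrix whose entries on a pattern `P` are entries `x (s i j)` of a vector, none repeated
within a row or a column, and which vanishes off `P`, has spectral norm at most `‖x‖₁`. -/
theorem matNorm2_le_of_toeplitz {n : ℕ} (x : Fin n → ℝ) (M : Matrix (Fin n) (Fin n) ℝ)
    (s : Fin n → Fin n → Fin n) (P : Fin n → Fin n → Prop)
    (h1 : ∀ i j, P i j → M i j = x (s i j)) (h0 : ∀ i j, ¬ P i j → M i j = 0)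
    (hr : ∀ i j j', P i j → P i j' → s i j = s i j' → j = j')
    (hc : ∀ j i i', P i j → P i' j → s i j = s i' j → i = i') :
    matNorm2 M ≤ vecNorm1 x :=
  matNorm2_le_of_sums M _ (vecNorm1_nonneg x)
    (fun i => sum_abs_le_vecNorm1 x (fun j => M i j) (s i) (P i) (h1 i) (h0 i) (hr i))
    (fun j => sum_abs_le_vecNorm1 x (fun i => M i j) (fun i => s i j) (fun i => P i j)
      (fun i => h1 i j) (fun i => h0 i j) (hc j))

theorem matNorm2_Lmat_le {n : ℕ} (x : Fin n → ℝ) : matNorm2 (Lmat x) ≤ vecNorm1 x := by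
  refine matNorm2_le_of_toeplitz x _ (fun i j => ⟨(i : ℕ) - j, by omega⟩)
    (fun i j => (j : ℕ) ≤ i) ?_ ?_ ?_ ?_
  · intro i j h; simp only [Lmat, Matrix.of_apply, if_pos h]
  · intro i j h; simp only [Lmat, Matrix.of_apply, if_neg h]
  all_goals
    intro a b c h h' e
    simp only [Fin.mk.injEq] at e
    ext; omega

theorem matNorm2_Rmat_le {n : ℕ} (y : Fin n → ℝ) : matNorm2 (Rmat y) ≤ vecNorm1 y := by
  refine matNorm2_le_of_toeplitz y _ (fun i j => ⟨n - 1 - ((j : ℕ) - i), by omega⟩)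
    (fun i j => (i : ℕ) ≤ j) ?_ ?_ ?_ ?_
  · intro i j h; simp only [Rmat, Matrix.of_apply, if_pos h]
  · intro i j h; simp only [Rmat, Matrix.of_apply, if_neg h]
  all_goals
    intro a b c h h' e
    simp only [Fin.mk.injEq] at e
    ext; omega

theorem matNorm2_L0mat_le {n : ℕ} (y : Fin n → ℝ) : matNorm2 (L0mat y) ≤ vecNorm1 y := by
  refine matNorm2_le_of_toeplitz y _ (fun i j => ⟨(i : ℕ) - j - 1, by omega⟩)
    (fun i j => (j : ℕ) < i) ?_ ?_ ?_ ?_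
  · intro i j h; simp only [L0mat, Matrix.of_apply, if_pos h]
  · intro i j h; simp only [L0mat, Matrix.of_apply, if_neg h]
  all_goals
    intro a b c h h' e
    simp only [Fin.mk.injEq] at e
    ext; omega

theorem matNorm2_R0mat_le {n : ℕ} (x : Fin n → ℝ) : matNorm2 (R0mat x) ≤ vecNorm1 x := by
  -- Off the pattern `i < j` the index `n - (j - i)` is out of range; the reduction modulo `n`
  -- makes it total and changes nothing on the pattern.
  refine matNorm2_le_of_toeplitz x _
    (fun i j => ⟨(n - ((j : ℕ) - i)) % n, Nat.mod_lt _ i.pos⟩)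
    (fun i j => (i : ℕ) < j) ?_ ?_ ?_ ?_
  · intro i j h
    simp only [R0mat, Matrix.of_apply, dif_pos h]
    congr 2
    rw [Nat.mod_eq_of_lt (by omega)]
  · intro i j h; simp only [R0mat, Matrix.of_apply, dif_neg h]
  all_goals
    intro a b c h h' e
    simp only [Fin.mk.injEq] at e
    rw [Nat.mod_eq_of_lt (by omega), Nat.mod_eq_of_lt (by omega)] at e
    ext; omega

/-! ### The Gohberg–Semencul numerator -/

theorem Lmat_lin {n : ℕ} (a b : ℝ) (x y : Fin n → ℝ) :
    Lmat (a • x - b • y) = a • Lmat x - b • Lmat y := by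
  ext i j; simp only [Lmat, Matrix.of_apply, Matrix.sub_apply, Matrix.smul_apply]
  split_ifs <;> simp

theorem Rmat_sub {n : ℕ} (x y : Fin n → ℝ) : Rmat (x - y) = Rmat x - Rmat y := by
  ext i j; simp only [Rmat, Matrix.of_apply, Matrix.sub_apply]
  split_ifs <;> simp

theorem L0mat_sub {n : ℕ} (x y : Fin n → ℝ) : L0mat (x - y) = L0mat x - L0mat y := by
  ext i j; simp only [L0mat, Matrix.of_apply, Matrix.sub_apply]
  split_ifs <;> simp

theorem R0mat_lin {n : ℕ} (a b : ℝ) (x y : Fin n → ℝ) :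
    R0mat (a • x - b • y) = a • R0mat x - b • R0mat y := by
  ext i j; simp only [R0mat, Matrix.of_apply, Matrix.sub_apply, Matrix.smul_apply]
  split_ifs <;> simp

/-- The numerator `L_x R_y - L⁰_y R⁰_x` of the Gohberg–Semencul expression. -/
def gsNum {n : ℕ} (x y : Fin n → ℝ) : Matrix (Fin n) (Fin n) ℝ :=
  Lmat x * Rmat y - L0mat y * R0mat x

theorem matNorm2_gsNum_le {n : ℕ} (x y : Fin n → ℝ) :
    matNorm2 (gsNum x y) ≤ 2 * (vecNorm1 x * vecNorm1 y) := by
  have hL := (matNorm2_mul_le (Lmat x) (Rmat y)).trans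
    (mul_le_mul (matNorm2_Lmat_le x) (matNorm2_Rmat_le y) (matNorm2_nonneg _)
      (vecNorm1_nonneg x))
  have hR := (matNorm2_mul_le (L0mat y) (R0mat x)).trans
    (mul_le_mul (matNorm2_L0mat_le y) (matNorm2_R0mat_le x) (matNorm2_nonneg _)
      (vecNorm1_nonneg y))
  have hs := matNorm2_sub_le (Lmat x * Rmat y) (L0mat y * R0mat x)
  unfold gsNum
  linarith

theorem gsNum_perturb {n : ℕ} (a b : ℝ) (x y xt yt : Fin n → ℝ) :
    b • gsNum xt yt - a • gsNum x y = gsNum (b • xt - a • x) yt + a • gsNum x (yt - y) := by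
  simp only [gsNum, Lmat_lin, Rmat_sub, L0mat_sub, R0mat_lin, sub_mul, mul_sub, smul_sub,
    Matrix.smul_mul, Matrix.mul_smul]
  abel

/-- Perturbation bound for the Gohberg–Semencul expression. -/
theorem matNorm2_GSF_sub_le {n : ℕ} [NeZero n] (x y xt yt : Fin n → ℝ) (hx : x 0 ≠ 0)
    (ε : ℝ) (hε : 0 < ε)
    (h1 : vecNorm1 (xt - x) ≤ ε * vecNorm1 x) (h2 : vecNorm1 (yt - y) ≤ ε * vecNorm1 y)
    (εt : ℝ) (hεt : εt = |1 / x 0 - 1 / xt 0| / |1 / x 0|) :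
    matNorm2 (GSF xt yt - GSF x y) ≤
      2 / |x 0| * (ε + (ε + (1 + ε) * εt) * (1 + ε)) * vecNorm1 x * vecNorm1 y := by
  set a := (x 0)⁻¹ with ha
  set b := (xt 0)⁻¹ with hb
  have ha0 : 0 < |a| := abs_pos.mpr (inv_ne_zero hx)
  have hba : |b - a| = |a| * εt := by
    rw [hεt, one_div, one_div, ← ha, ← hb, abs_sub_comm b a]
    field_simp
  have hεt0 : 0 ≤ εt := by rw [hεt]; positivity
  have hX := vecNorm1_nonneg x
  have hY := vecNorm1_nonneg y
  have hxt : vecNorm1 xt ≤ (1 + ε) * vecNorm1 x := by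
    have := vecNorm1_add_le (xt - x) x
    rw [sub_add_cancel] at this
    linarith
  have hyt : vecNorm1 yt ≤ (1 + ε) * vecNorm1 y := by
    have := vecNorm1_add_le (yt - y) y
    rw [sub_add_cancel] at this
    linarith
  have hd : vecNorm1 (b • xt - a • x) ≤ |a| * (ε + (1 + ε) * εt) * vecNorm1 x := by
    have e : b • xt - a • x = (b - a) • xt + a • (xt - x) := by
      rw [sub_smul, smul_sub]; abel
    rw [e]
    refine (vecNorm1_add_le _ _).trans ?_
    rw [vecNorm1_smul, vecNorm1_smul, hba]
    calc |a| * εt * vecNorm1 xt + |a| * vecNorm1 (xt - x)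
        ≤ |a| * εt * ((1 + ε) * vecNorm1 x) + |a| * (ε * vecNorm1 x) := by gcongr
      _ = _ := by ring
  have e : GSF xt yt - GSF x y = b • gsNum xt yt - a • gsNum x y := rfl
  rw [e, gsNum_perturb]
  refine (matNorm2_add_le _ _).trans ?_
  rw [matNorm2_smul]
  calc matNorm2 (gsNum (b • xt - a • x) yt) + |a| * matNorm2 (gsNum x (yt - y))
      ≤ 2 * (vecNorm1 (b • xt - a • x) * vecNorm1 yt)
        + |a| * (2 * (vecNorm1 x * vecNorm1 (yt - y))) := by
        gcongr
        · exact matNorm2_gsNum_le _ _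
        · exact matNorm2_gsNum_le _ _
    _ ≤ 2 * ((|a| * (ε + (1 + ε) * εt) * vecNorm1 x) * ((1 + ε) * vecNorm1 y))
        + |a| * (2 * (vecNorm1 x * (ε * vecNorm1 y))) := by
        gcongr
        exact vecNorm1_nonneg yt
    _ = _ := by
        rw [ha, abs_inv]; ring

/-! ### The residual gap -/

/-- Combined bound: the residual gap in the inexact shift-and-invert Arnoldi
method with GSF-based inexact inverse. -/
theorem residual_gap_gsf_bound {n m : ℕ} [NeZero n] [NeZero m]
    (A : Matrix (Fin n) (Fin n) ℝ) (γ : ℝ) (hγ : γ ≠ 0)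
    (hA : IsUnit (1 + γ • A))
    (x y xt yt : Fin n → ℝ)
    (hTx : (1 + γ • A).mulVec x = Pi.single 0 1)
    (hTy : (1 + γ • A).mulVec y = Pi.single (lastIdx n) 1)
    (hx : x 0 ≠ 0) (hGSF : (1 + γ • A)⁻¹ = GSF x y)
    (hxt : xt 0 ≠ 0) (ε : ℝ) (hε : 0 < ε)
    (h1 : vecNorm1 (xt - x) ≤ ε * vecNorm1 x)
    (h2 : vecNorm1 (yt - y) ≤ ε * vecNorm1 y)
    (εt : ℝ) (hεt : εt = |1 / x 0 - 1 / xt 0| / |1 / x 0|)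
    (V F : Matrix (Fin n) (Fin m) ℝ) (Ht : Matrix (Fin m) (Fin m) ℝ)
    (hHt : IsUnit Ht) (ht : ℝ) (v : Fin n → ℝ)
    (hVV : Vᵀ * V = 1)
    (hrel : (1 + γ • A)⁻¹ * V + F = V * Ht + ht • vecMulVec v (Pi.single (lastIdx m) 1))
    (hF : ∀ i : Fin m, (fun k => F k i) =
      (GSF xt yt).mulVec (fun j => V j i) - (1 + γ • A)⁻¹.mulVec (fun j => V j i))
    (G : Matrix (Fin n) (Fin n) ℝ)
    (hG : G = -((1 / γ) • ((1 + γ • A) * F * Ht⁻¹ * Vᵀ))) :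
    ∀ u : Fin m → ℝ,
      vecNorm2 (G.mulVec (V.mulVec u)) ≤
        2 / (|γ| * |x 0|) * (ε + (ε + (1 + ε) * εt) * (1 + ε)) *
          vecNorm1 x * vecNorm1 y * Real.sqrt m * matNorm2 (1 + γ • A) *
            vecNorm2 (Ht⁻¹.mulVec u) := by
  intro u
  have hFE : F = (GSF xt yt - GSF x y) * V := by
    ext k i
    have := congrFun (hF i) k
    rw [hGSF, ← Matrix.sub_mulVec] at this
    exact this
  have hE := matNorm2_GSF_sub_le x y xt yt hx ε hε h1 h2 εt hεt
  set E := GSF xt yt - GSF x y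
  set T := 1 + γ • A
  set z := Ht⁻¹.mulVec u
  set K := 2 / |x 0| * (ε + (ε + (1 + ε) * εt) * (1 + ε)) * vecNorm1 x * vecNorm1 y with hK
  have hGV : G.mulVec (V.mulVec u) = (-(1 / γ)) • T.mulVec (E.mulVec (V.mulVec z)) := by
    have hcancel : T * (E * V) * Ht⁻¹ * Vᵀ * V = T * (E * V) * Ht⁻¹ := by
      rw [Matrix.mul_assoc _ Vᵀ V, hVV, Matrix.mul_one]
    rw [hG, hFE, Matrix.mulVec_mulVec, Matrix.neg_mul, Matrix.smul_mul, hcancel,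
      Matrix.neg_mulVec, Matrix.smul_mulVec, neg_smul]
    simp only [z, Matrix.mulVec_mulVec, Matrix.mul_assoc]
  have hm : 1 ≤ Real.sqrt m := by
    rw [Real.one_le_sqrt]
    exact_mod_cast Nat.one_le_iff_ne_zero.mpr (NeZero.ne m)
  have hT := matNorm2_nonneg T
  have hz := vecNorm2_nonneg z
  have hK0 : 0 ≤ K := (matNorm2_nonneg E).trans hE
  rw [hGV, vecNorm2_smul, abs_neg, abs_div, abs_one]
  calc 1 / |γ| * vecNorm2 (T.mulVec (E.mulVec (V.mulVec z)))
      ≤ 1 / |γ| * (matNorm2 T * (K * vecNorm2 z)) := by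
        gcongr
        refine (vecNorm2_mulVec_le T _).trans ?_
        gcongr
        refine (vecNorm2_mulVec_le E _).trans ?_
        rw [vecNorm2_mulVec_of_orthonormal V hVV]
        gcongr
    _ ≤ 1 / |γ| * (matNorm2 T * (K * vecNorm2 z)) * Real.sqrt m :=
        le_mul_of_one_le_right (by positivity) hm
    _ = _ := by
        rw [hK]; field_simp

end
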